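/- arXiv:2201.11590 — 2 statements merged into one kernel-verified Lean document; each statement's English description precedes it below -/
import Mathlib

section
/- Let a ∈ ℝ, c > 0, and Ψ > 0 be real constants. The function U : (0, ∞) → ℝ defined by U(Q) = Q·(a − c·(exp(ΨQ) − exp(Ψ))) is a concave function of Q on (0, ∞). -/
open Real

/-- For a ∈ ℝ, c > 0, Ψ > 0, the function
`U(Q) = Q·(a − c·(exp(ΨQ) − exp(Ψ)))` is concave on `(0, ∞)`. -/
theorem U_concave
    (a c Ψ : ℝ) (hc : 0 < c) (hΨ : 0 < Ψ) :
    ConcaveOn ℝ (Set.Ioi (0:ℝ))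
      (fun Q : ℝ => Q * (a - c * (Real.exp (Ψ * Q) - Real.exp Ψ))) := by
  refine ⟨convex_Ioi 0, ?_⟩
  intro x hx y hy s t hs ht hst
  simp only [Set.mem_Ioi] at hx hy
  simp only [smul_eq_mul]
  have h1 : Real.exp (Ψ * (s * x + t * y)) ≤ s * Real.exp (Ψ * x) + t * Real.exp (Ψ * y) := by
    have h := convexOn_exp.2 (Set.mem_univ (Ψ * x)) (Set.mem_univ (Ψ * y)) hs ht hst
    simp only [smul_eq_mul] at h
    have e : Ψ * (s * x + t * y) = s * (Ψ * x) + t * (Ψ * y) := by ring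
    rw [e]
    exact h
  have h2 : 0 ≤ (x - y) * (Real.exp (Ψ * x) - Real.exp (Ψ * y)) := by
    rcases le_total x y with h | h
    · have := Real.exp_le_exp.2 (mul_le_mul_of_nonneg_left h hΨ.le)
      exact mul_nonneg_of_nonpos_of_nonpos (by linarith) (by linarith)
    · have := Real.exp_le_exp.2 (mul_le_mul_of_nonneg_left h hΨ.le)
      exact mul_nonneg (by linarith) (by linarith)
  have hz : 0 ≤ s * x + t * y := by positivity
  generalize Real.exp (Ψ * (s * x + t * y)) = Z at *
  generalize Real.exp (Ψ * x) = X at *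
  generalize Real.exp (Ψ * y) = Y at *
  have h3 := mul_le_mul_of_nonneg_left h1 (mul_nonneg hc.le hz)
  have h4 := mul_nonneg (mul_nonneg hc.le (mul_nonneg hs ht)) h2
  obtain rfl : t = 1 - s := by linarith
  nlinarith [h3, h4]
end

section
/- Let T_th, D_f, T₀, f_R, Ψ be positive real constants. The function V : (0, ∞) → ℝ defined by V(Q) = (Q/T₀)·(T_th/D_f − (exp(ΨQ) − exp(Ψ))/f_R) is a concave function of Q on (0, ∞). -/
open Real

/-- For positive constants T_th, D_f, T₀, f_R, Ψ, the function
`V(Q) = (Q/T₀)·(T_th/D_f − (exp(ΨQ) − exp(Ψ))/f_R)` is concave on `(0, ∞)`. -/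
theorem V_concave
    (Tth Df T0 fR Ψ : ℝ)
    (hTth : 0 < Tth) (hDf : 0 < Df) (hT0 : 0 < T0) (hfR : 0 < fR) (hΨ : 0 < Ψ) :
    ConcaveOn ℝ (Set.Ioi (0:ℝ))
      (fun Q : ℝ =>
        (Q / T0) * (Tth / Df - (Real.exp (Ψ * Q) - Real.exp Ψ) / fR)) := by
  refine ⟨convex_Ioi 0, ?_⟩
  intro x hx y hy a b ha hb hab
  simp only [Set.mem_Ioi] at hx hy
  simp only [smul_eq_mul]
  have hconv : Real.exp (Ψ * (a * x + b * y)) ≤ a * Real.exp (Ψ * x) + b * Real.exp (Ψ * y) := by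
    have h := convexOn_exp.2 (Set.mem_univ (Ψ * x)) (Set.mem_univ (Ψ * y)) ha hb hab
    simp only [smul_eq_mul] at h
    have e : Ψ * (a * x + b * y) = a * (Ψ * x) + b * (Ψ * y) := by ring
    rw [e]
    exact h
  have hmono : 0 ≤ (x - y) * (Real.exp (Ψ * x) - Real.exp (Ψ * y)) := by
    rcases le_total x y with h | h
    · have : Real.exp (Ψ * x) ≤ Real.exp (Ψ * y) := by gcongr
      exact mul_nonneg_of_nonpos_of_nonpos (by linarith) (by linarith)
    · have : Real.exp (Ψ * y) ≤ Real.exp (Ψ * x) := by gcongr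
      exact mul_nonneg (by linarith) (by linarith)
  have hm : 0 ≤ a * x + b * y := by positivity
  generalize Real.exp (Ψ * (a * x + b * y)) = M at *
  generalize Real.exp (Ψ * x) = X at *
  generalize Real.exp (Ψ * y) = Y at *
  have h1 := mul_le_mul_of_nonneg_left hconv hm
  have h2 := mul_nonneg (mul_nonneg ha hb) hmono
  have hb' : b = 1 - a := by linarith
  have key : 0 ≤ a * x * X + b * y * Y - (a * x + b * y) * M := by
    subst hb'
    nlinarith
  have h3 : 0 ≤ (a * x * X + b * y * Y - (a * x + b * y) * M) / (T0 * fR) := by positivity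
  have e : (a * x + b * y) / T0 * (Tth / Df - (M - Real.exp Ψ) / fR)
      - (a * (x / T0 * (Tth / Df - (X - Real.exp Ψ) / fR))
        + b * (y / T0 * (Tth / Df - (Y - Real.exp Ψ) / fR)))
      = (a * x * X + b * y * Y - (a * x + b * y) * M) / (T0 * fR) := by
    field_simp
    ring
  linarith
end
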